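/- (Plancherel formula for the affine group.) For every smooth compactly supported f : ℝ² → ℂ: 2π ∫∫_{ℝ²} e^{a} |f(a,b)|² da db = ∑_{ν ∈ {−1,+1}} ∫∫_{ℝ²} e^{-u} |f̃(u−s, ν e^{-s})|² ds du, where f̃(a,β) := e^{a} ∫_ℝ f(a,b) e^{ibβ} db. Equivalently, the L² norm of f with respect to the left Haar measure e^{a} da db equals the sum over ν = ±1 of the Hilbert–Schmidt norms of the integral kernels e^{-u/2} f̃(u−s, ν e^{-s}). -/

import Mathlib

open MeasureTheory

/-- The partial Fourier transform `f̃(a,β) := e^{a} ∫ f(a,b) e^{ibβ} db`. -/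
noncomputable def tildeT (f : ℝ × ℝ → ℂ) : ℝ × ℝ → ℂ := fun p =>
  Real.exp p.1 • ∫ b : ℝ, f (p.1, b) * Complex.exp (Complex.I * b * p.2)

open scoped FourierTransform SchwartzMap

noncomputable def pfAux (f : ℝ × ℝ → ℂ) (p : ℝ × ℝ) : ℂ :=
  ∫ b : ℝ, f (p.1, b) * Complex.exp (Complex.I * b * p.2)

theorem pfAux_meas (f : ℝ × ℝ → ℂ) (hf : Continuous f) : StronglyMeasurable (pfAux f) := by
  have : StronglyMeasurable (fun q : (ℝ × ℝ) × ℝ =>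
      f (q.1.1, q.2) * Complex.exp (Complex.I * q.2 * q.1.2)) :=
    Continuous.stronglyMeasurable (by fun_prop)
  exact this.integral_prod_right

theorem planch1 (g : ℝ → ℂ) (hg : ContDiff ℝ (⊤ : ℕ∞) g) (hg' : HasCompactSupport g) :
    ∫⁻ β : ℝ, ENNReal.ofReal (‖∫ b : ℝ, g b * Complex.exp (Complex.I * b * β)‖ ^ 2)
      = ENNReal.ofReal (2 * Real.pi) * ∫⁻ b : ℝ, ENNReal.ofReal (‖g b‖ ^ 2) := by
  set G : 𝓢(ℝ, ℂ) := hg'.toSchwartzMap hg with hG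
  have hGc : ∀ x, G x = g x := fun x => rfl
  have key : ∀ β : ℝ, ∫ b : ℝ, g b * Complex.exp (Complex.I * b * β)
      = (𝓕 G) (-(2 * Real.pi)⁻¹ * β) := by
    intro β
    rw [SchwartzMap.fourier_coe, Real.fourier_real_eq_integral_exp_smul]
    congr 1 with b
    rw [smul_eq_mul, hGc, mul_comm]
    congr 2
    push_cast
    have : (Real.pi : ℂ) ≠ 0 := by exact_mod_cast Real.pi_ne_zero
    field_simp
  simp_rw [key]
  have hI : ∀ F : 𝓢(ℝ, ℂ), Integrable (fun x => ‖F x‖ ^ 2) := fun F =>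
    (F.memLp 2).integrable_norm_pow (by norm_num)
  have hc : -(2 * Real.pi)⁻¹ ≠ 0 := by have := Real.pi_pos; simp [this.ne']
  rw [← ofReal_integral_eq_lintegral_ofReal ((hI (𝓕 G)).comp_mul_left' hc)
    (Filter.Eventually.of_forall fun x => by positivity)]
  have h2 : ∫⁻ b : ℝ, ENNReal.ofReal (‖g b‖ ^ 2) = ENNReal.ofReal (∫ b, ‖G b‖ ^ 2) := by
    rw [ofReal_integral_eq_lintegral_ofReal (hI G)
      (Filter.Eventually.of_forall fun x => by positivity)]
    rfl
  rw [h2, ← ENNReal.ofReal_mul (by positivity), ← SchwartzMap.integral_norm_sq_fourier,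
    Measure.integral_comp_mul_left (fun x => ‖(𝓕 G : 𝓢(ℝ, ℂ)) x‖ ^ 2)]
  congr 1
  have := Real.pi_pos
  rw [smul_eq_mul, inv_neg, inv_inv, abs_neg, abs_of_pos (by positivity)]

theorem half (c : ℝ) (hc : |c| = 1) (g : ℝ → ENNReal) :
    ∫⁻ s : ℝ, ENNReal.ofReal (Real.exp (-s)) * g (c * Real.exp (-s))
      = ∫⁻ x in Set.range (fun s : ℝ => c * Real.exp (-s)), g x := by
  have hc0 : c ≠ 0 := by rintro rfl; simp at hc
  have h := lintegral_image_eq_lintegral_abs_deriv_mul (s := Set.univ)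
    (f := fun s : ℝ => c * Real.exp (-s)) (f' := fun s => c * (Real.exp (-s) * (-1)))
    MeasurableSet.univ
    (fun x _ => (((hasDerivAt_neg x).exp).const_mul c).hasDerivWithinAt)
    (fun x _ y _ hxy => by
      have := mul_left_cancel₀ hc0 hxy
      simpa using this) g
  rw [Set.image_univ] at h
  rw [h]
  simp [abs_mul, hc]

theorem range_neg : Set.range (fun s : ℝ => (-1) * Real.exp (-s)) = Set.Iio 0 := by
  ext x
  simp only [Set.mem_range, Set.mem_Iio]
  constructor
  · rintro ⟨s, rfl⟩
    have := Real.exp_pos (-s)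
    linarith
  · intro h
    exact ⟨-Real.log (-x), by rw [neg_neg, Real.exp_log (by linarith)]; ring⟩

theorem range_pos : Set.range (fun s : ℝ => 1 * Real.exp (-s)) = Set.Ioi 0 := by
  ext x
  simp only [Set.mem_range, Set.mem_Ioi]
  constructor
  · rintro ⟨s, rfl⟩
    have := Real.exp_pos (-s)
    linarith
  · intro h
    exact ⟨-Real.log x, by rw [neg_neg, Real.exp_log h]; ring⟩

theorem halves (g : ℝ → ENNReal) :
    (∫⁻ s : ℝ, ENNReal.ofReal (Real.exp (-s)) * g ((-1) * Real.exp (-s)))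
     + (∫⁻ s : ℝ, ENNReal.ofReal (Real.exp (-s)) * g (1 * Real.exp (-s))) = ∫⁻ x, g x := by
  rw [half (-1) (by simp), half 1 (by simp), range_neg, range_pos,
    ← lintegral_add_compl (μ := volume) g (measurableSet_Iio (a := (0 : ℝ))), Set.compl_Iio,
    setLIntegral_congr (Ioi_ae_eq_Ici (a := (0 : ℝ)))]

theorem side (f : ℝ × ℝ → ℂ) (hf : Continuous f) (c : ℝ) :
    ∫⁻ p : ℝ × ℝ, ENNReal.ofReal (Real.exp (-p.2) *
            ‖tildeT f (p.2 - p.1, c * Real.exp (-p.1))‖ ^ 2)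
    = ∫⁻ a : ℝ, ENNReal.ofReal (Real.exp a) * ∫⁻ s : ℝ, ENNReal.ofReal (Real.exp (-s)) *
        ENNReal.ofReal (‖pfAux f (a, c * Real.exp (-s))‖ ^ 2) := by
  have hm := (pfAux_meas f hf).measurable
  have e : ∀ p : ℝ × ℝ, ENNReal.ofReal (Real.exp (-p.2) *
            ‖tildeT f (p.2 - p.1, c * Real.exp (-p.1))‖ ^ 2)
      = ENNReal.ofReal (Real.exp (p.2 - p.1)) * (ENNReal.ofReal (Real.exp (-p.1)) *
        ENNReal.ofReal (‖pfAux f (p.2 - p.1, c * Real.exp (-p.1))‖ ^ 2)) := by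
    intro p
    rw [← ENNReal.ofReal_mul (by positivity), ← ENNReal.ofReal_mul (by positivity)]
    congr 1
    have : tildeT f (p.2 - p.1, c * Real.exp (-p.1))
      = Real.exp (p.2 - p.1) • pfAux f (p.2 - p.1, c * Real.exp (-p.1)) := rfl
    rw [this, norm_smul, Real.norm_eq_abs, abs_of_pos (Real.exp_pos _), mul_pow, ← mul_assoc,
      ← mul_assoc, ← Real.exp_nat_mul, ← Real.exp_add, ← Real.exp_add]
    congr 2
    push_cast
    ring
  simp_rw [e]
  have hF : Measurable (fun q : ℝ × ℝ => ENNReal.ofReal (Real.exp q.2) *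
      (ENNReal.ofReal (Real.exp (-q.1)) *
        ENNReal.ofReal (‖pfAux f (q.2, c * Real.exp (-q.1))‖ ^ 2))) := by
    fun_prop
  rw [Measure.volume_eq_prod, lintegral_prod _ (Measurable.aemeasurable (by fun_prop))]
  have e2 : ∀ s : ℝ, ∫⁻ u : ℝ, ENNReal.ofReal (Real.exp (u - s)) *
      (ENNReal.ofReal (Real.exp (-s)) *
        ENNReal.ofReal (‖pfAux f (u - s, c * Real.exp (-s))‖ ^ 2))
      = ∫⁻ a : ℝ, ENNReal.ofReal (Real.exp a) *
      (ENNReal.ofReal (Real.exp (-s)) *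
        ENNReal.ofReal (‖pfAux f (a, c * Real.exp (-s))‖ ^ 2)) := fun s =>
    lintegral_sub_right_eq_self (fun a : ℝ => ENNReal.ofReal (Real.exp a) *
      (ENNReal.ofReal (Real.exp (-s)) *
        ENNReal.ofReal (‖pfAux f (a, c * Real.exp (-s))‖ ^ 2))) s
  simp_rw [e2]
  rw [lintegral_lintegral_swap hF.aemeasurable]
  congr 1 with a
  rw [lintegral_const_mul]
  fun_prop

theorem total (f : ℝ × ℝ → ℂ) (hf : ContDiff ℝ (⊤ : ℕ∞) f) (hf' : HasCompactSupport f) :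
    (∫⁻ p : ℝ × ℝ, ENNReal.ofReal (Real.exp (-p.2) *
            ‖tildeT f (p.2 - p.1, -1 * Real.exp (-p.1))‖ ^ 2)) +
    (∫⁻ p : ℝ × ℝ, ENNReal.ofReal (Real.exp (-p.2) *
            ‖tildeT f (p.2 - p.1, 1 * Real.exp (-p.1))‖ ^ 2))
    = ENNReal.ofReal (2 * Real.pi) * ∫⁻ p : ℝ × ℝ, ENNReal.ofReal (Real.exp p.1 * ‖f p‖ ^ 2) := by
  have hc := hf.continuous
  have hm := (pfAux_meas f hc).measurable
  rw [side f hc, side f hc, ← lintegral_add_left]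
  swap
  · refine Measurable.mul (by fun_prop) ?_
    refine Measurable.lintegral_prod_right' (f := fun q : ℝ × ℝ => ENNReal.ofReal (Real.exp (-q.2)) *
        ENNReal.ofReal (‖pfAux f (q.1, -1 * Real.exp (-q.2))‖ ^ 2)) ?_
    fun_prop
  have hM : Measurable (fun p : ℝ × ℝ => ENNReal.ofReal (Real.exp p.1 * ‖f p‖ ^ 2)) := by
    have := hc.measurable
    fun_prop
  rw [Measure.volume_eq_prod, lintegral_prod _ hM.aemeasurable, ← lintegral_const_mul]
  swap
  · exact hM.lintegral_prod_right'
  congr 1 with a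
  rw [← mul_add, halves (fun x => ENNReal.ofReal (‖pfAux f (a, x)‖ ^ 2))]
  have hg : ContDiff ℝ (⊤ : ℕ∞) (fun b : ℝ => f (a, b)) := hf.comp (by fun_prop)
  have hg' : HasCompactSupport (fun b : ℝ => f (a, b)) := by
    refine hf'.comp_isClosedEmbedding (g := fun b : ℝ => (a, b)) ?_
    refine Isometry.isClosedEmbedding (Isometry.of_dist_eq fun x y => ?_)
    simp [Prod.dist_eq]
  have := planch1 _ hg hg'
  change _ * (∫⁻ β : ℝ, ENNReal.ofReal
    (‖∫ b : ℝ, f (a, b) * Complex.exp (Complex.I * b * β)‖ ^ 2)) = _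
  rw [this]
  simp_rw [ENNReal.ofReal_mul (Real.exp_pos a).le]
  rw [lintegral_const_mul]
  · ring
  · have := hc.measurable
    fun_prop

/-- Plancherel formula for the affine group: for `f` smooth and compactly supported,
`2π ∫∫ e^{a} |f(a,b)|² da db = ∑_{ν=±1} ∫∫ e^{-u} |f̃(u−s, ν e^{-s})|² ds du`. -/
theorem stmt_14 (f : ℝ × ℝ → ℂ) (hf : ContDiff ℝ (⊤ : ℕ∞) f) (hf' : HasCompactSupport f) :
    2 * Real.pi * ∫ p : ℝ × ℝ, Real.exp p.1 * ‖f p‖ ^ 2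
      = (∫ p : ℝ × ℝ, Real.exp (-p.2) *
            ‖tildeT f (p.2 - p.1, -1 * Real.exp (-p.1))‖ ^ 2) +
        (∫ p : ℝ × ℝ, Real.exp (-p.2) *
            ‖tildeT f (p.2 - p.1, 1 * Real.exp (-p.1))‖ ^ 2) := by
  have hc := hf.continuous
  have hm := (pfAux_meas f hc).measurable
  have ht : Measurable (tildeT f) := by
    have : tildeT f = fun p => Real.exp p.1 • pfAux f p := rfl
    rw [this]
    fun_prop
  have hT := total f hf hf'
  have hint : Integrable (fun p : ℝ × ℝ => Real.exp p.1 * ‖f p‖ ^ 2) := by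
    apply Continuous.integrable_of_hasCompactSupport (by fun_prop)
    apply HasCompactSupport.mul_left
    exact hf'.comp_left (g := fun z : ℂ => ‖z‖ ^ 2) (by simp)
  have hfin : ENNReal.ofReal (2 * Real.pi) *
      ∫⁻ p : ℝ × ℝ, ENNReal.ofReal (Real.exp p.1 * ‖f p‖ ^ 2) ≠ ⊤ := by
    rw [← ofReal_integral_eq_lintegral_ofReal hint
      (Filter.Eventually.of_forall fun x => by positivity)]
    exact ENNReal.mul_ne_top ENNReal.ofReal_ne_top ENNReal.ofReal_ne_top
  have hfin2 := hfin
  rw [← hT, ENNReal.add_ne_top] at hfin2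
  have hR : ∀ c : ℝ, ∫ p : ℝ × ℝ, Real.exp (-p.2) *
            ‖tildeT f (p.2 - p.1, c * Real.exp (-p.1))‖ ^ 2
      = (∫⁻ p : ℝ × ℝ, ENNReal.ofReal (Real.exp (-p.2) *
            ‖tildeT f (p.2 - p.1, c * Real.exp (-p.1))‖ ^ 2)).toReal := fun c => by
    refine integral_eq_lintegral_of_nonneg_ae
      (Filter.Eventually.of_forall fun x => by positivity) ?_
    exact Measurable.aestronglyMeasurable (by fun_prop)
  rw [hR, hR, ← ENNReal.toReal_add hfin2.1 hfin2.2, hT, ENNReal.toReal_mul,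
    ENNReal.toReal_ofReal (by positivity), integral_eq_lintegral_of_nonneg_ae
      (Filter.Eventually.of_forall fun x => by positivity) hint.aestronglyMeasurable]
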